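/- arXiv:1407.0615 — 2 statements merged into one kernel-verified Lean document; each statement's English description precedes it below -/
import Mathlib

section
/- Let ν be a real number with ν ≥ 1 and let k ≥ 1. Then J_{ν−1}(z) + J_ν(z) ≠ 0 for every z in the closed interval [j_{ν,k}, j_{ν−1,k+1}], where j_{ν,k} is the k-th positive zero of J_ν and j_{ν−1,k+1} is the (k+1)-th positive zero of J_{ν−1}. -/
/-- Bessel function of the first kind of real order `ν`, defined via its power series
`J_ν(z) = ∑ₘ (−1)^m / (m! Γ(ν+m+1)) (z/2)^(ν+2m)` (with real-exponent powers). -/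
noncomputable def besselJ (ν z : ℝ) : ℝ :=
  ∑' m : ℕ, ((-1 : ℝ) ^ m / (Nat.factorial m * Real.Gamma (ν + m + 1))) *
    (z / 2) ^ (ν + 2 * (m : ℝ))

/-- `x` (indexed by `k ≥ 1`) enumerates the positive zeroes of `f`: it is strictly
increasing on indices `k ≥ 1`, each `x k` is a positive zero of `f`, and every positive
zero of `f` is some `x k`. -/
def EnumPosZeros (f : ℝ → ℝ) (x : ℕ → ℝ) : Prop :=
  StrictMonoOn x (Set.Ici 1) ∧ (∀ k, 1 ≤ k → 0 < x k ∧ f (x k) = 0) ∧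
    ∀ z : ℝ, 0 < z → f z = 0 → ∃ k, 1 ≤ k ∧ x k = z

noncomputable def bcoef (μ : ℝ) (m : ℕ) : ℝ :=
  (-1 : ℝ) ^ m / (Nat.factorial m * Real.Gamma (μ + m + 1))

noncomputable def bE (μ w : ℝ) : ℝ := ∑' m : ℕ, bcoef μ m * w ^ m

lemma gamma_lb (μ : ℝ) (hμ : 0 ≤ μ) (m : ℕ) :
    Real.Gamma (μ + 1) ≤ Real.Gamma (μ + m + 1) := by
  induction m with
  | zero => simp
  | succ n ih =>
    have h1 : (0:ℝ) < μ + n + 1 := by positivity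
    have h := Real.Gamma_add_one h1.ne'
    have h2 : 0 < Real.Gamma (μ + n + 1) := Real.Gamma_pos_of_pos h1
    have h3 : (0:ℝ) ≤ n := by positivity
    push_cast
    rw [show μ + ((n:ℝ) + 1) + 1 = μ + n + 1 + 1 by ring, h]
    nlinarith

lemma bcoef_bound (μ : ℝ) (hμ : 0 ≤ μ) (m : ℕ) :
    |bcoef μ m| ≤ (Real.Gamma (μ + 1))⁻¹ * (1 / (Nat.factorial m : ℝ)) := by
  have h0 : 0 < Real.Gamma (μ + 1) := Real.Gamma_pos_of_pos (by positivity)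
  have h1 := gamma_lb μ hμ m
  have h2 : 0 < Real.Gamma (μ + m + 1) := lt_of_lt_of_le h0 h1
  have h3 : (0:ℝ) < Nat.factorial m := by positivity
  unfold bcoef
  rw [abs_div, abs_pow, abs_neg, abs_one, one_pow, abs_of_pos (by positivity)]
  rw [← one_div, div_mul_div_comm, one_mul]
  apply one_div_le_one_div_of_le (by positivity)
  nlinarith

lemma bsummable_bound (C R : ℝ) :
    Summable fun m : ℕ => C * (1 / (Nat.factorial m : ℝ)) * R ^ m := by
  have h := (Real.summable_pow_div_factorial R).mul_left C
  refine h.congr fun m => ?_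
  ring

lemma bterm_bound (μ : ℝ) (hμ : 0 ≤ μ) (w R : ℝ) (hw : |w| ≤ R) (m : ℕ) :
    ‖bcoef μ m * w ^ m‖ ≤ (Real.Gamma (μ + 1))⁻¹ * (1 / (Nat.factorial m : ℝ)) * R ^ m := by
  rw [norm_mul, Real.norm_eq_abs, norm_pow, Real.norm_eq_abs]
  have := bcoef_bound μ hμ m
  gcongr

lemma bE_summable (μ : ℝ) (hμ : 0 ≤ μ) (w : ℝ) : Summable fun m => bcoef μ m * w ^ m :=
  Summable.of_norm_bounded (bsummable_bound _ |w|) (bterm_bound μ hμ w |w| le_rfl)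

lemma bcoef_succ (μ : ℝ) (m : ℕ) :
    bcoef μ (m+1) * ((m : ℝ) + 1) = - bcoef (μ+1) m := by
  unfold bcoef
  rw [Nat.factorial_succ, pow_succ]
  push_cast
  rw [show μ + ((m:ℝ)+1) + 1 = μ + 1 + m + 1 by ring]
  have : (m:ℝ) + 1 ≠ 0 := by positivity
  by_cases hG : Real.Gamma (μ + 1 + m + 1) = 0
  · simp [hG]
  have hf : (Nat.factorial m : ℝ) ≠ 0 := by positivity
  field_simp

lemma bcoef_low (μ : ℝ) (hμ : 0 ≤ μ) (m : ℕ) :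
    (μ + 1 + m) * bcoef (μ+1) m = bcoef μ m := by
  unfold bcoef
  have h1 : (0:ℝ) < μ + 1 + m := by positivity
  rw [Real.Gamma_add_one h1.ne', show μ + (m:ℝ) + 1 = μ + 1 + m by ring]
  have h2 := (Real.Gamma_pos_of_pos h1).ne'
  have hf : (Nat.factorial m : ℝ) ≠ 0 := by positivity
  field_simp

lemma bE_hasDerivAt (μ : ℝ) (hμ : 0 ≤ μ) (w : ℝ) :
    HasDerivAt (bE μ) (- bE (μ+1) w) w := by
  have hfun : bE μ = fun y => bcoef μ 0 + ∑' m : ℕ, bcoef μ (m+1) * y ^ (m+1) := by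
    funext y
    unfold bE
    rw [(bE_summable μ hμ y).tsum_eq_zero_add]
    simp
  rw [hfun]
  have key := hasDerivAt_tsum_of_isPreconnected
    (g := fun (m:ℕ) (y:ℝ) => bcoef μ (m+1) * y ^ (m+1))
    (g' := fun (m:ℕ) (y:ℝ) => - (bcoef (μ+1) m * y ^ m))
    (t := Metric.ball (0:ℝ) (|w|+1)) (y₀ := 0) (y := w)
    (bsummable_bound (Real.Gamma (μ + 1 + 1))⁻¹ (|w|+1))
    Metric.isOpen_ball (convex_ball _ _).isPreconnected
    (by
      intro n y _
      have := (hasDerivAt_pow (n+1) y).const_mul (bcoef μ (n+1))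
      refine this.congr_deriv ?_
      rw [← neg_mul, ← bcoef_succ]
      push_cast
      ring)
    (by
      intro n y hy
      rw [norm_neg]
      apply bterm_bound _ (by positivity)
      rw [mem_ball_zero_iff, Real.norm_eq_abs] at hy
      exact hy.le)
    (by simp; positivity)
    (by simp [summable_zero])
    (by simp)
  rw [tsum_neg] at key
  exact key.const_add _

lemma bE_rec (μ : ℝ) (hμ : 0 ≤ μ) (w : ℝ) :
    (μ + 1) * bE (μ+1) w - w * bE (μ+1+1) w = bE μ w := by
  have hμ1 : 0 ≤ μ + 1 := by positivity
  have hμ2 : 0 ≤ μ + 1 + 1 := by positivity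
  have s0 := (bE_summable μ hμ w).hasSum
  have s1 := (bE_summable (μ+1) hμ1 w).hasSum.mul_left (μ+1)
  have s2 := (bE_summable (μ+1+1) hμ2 w).hasSum.mul_left (-w)
  have s3 : HasSum (fun m : ℕ => (m:ℝ) * (bcoef (μ+1) m * w ^ m)) (-w * bE (μ+1+1) w) := by
    rw [← hasSum_nat_add_iff' 1]
    simp only [Finset.range_one, Finset.sum_singleton, Nat.cast_zero, zero_mul, sub_zero]
    have hfe : (fun m : ℕ => ((m + 1 : ℕ):ℝ) * (bcoef (μ+1) (m+1) * w ^ (m+1)))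
        = fun m => -w * (bcoef (μ+1+1) m * w ^ m) := by
      funext m
      have := bcoef_succ (μ+1) m
      push_cast
      rw [pow_succ]
      linear_combination (w ^ m * w) * this
    rw [hfe]
    exact s2
  have s4 := s1.add s3
  have : (fun m : ℕ => (μ+1) * (bcoef (μ+1) m * w ^ m) + (m:ℝ) * (bcoef (μ+1) m * w ^ m))
      = fun m => bcoef μ m * w ^ m := by
    funext m
    rw [← bcoef_low μ hμ]
    ring
  rw [this] at s4
  have := s4.unique s0
  unfold bE at *
  linarith

noncomputable def be (μ z : ℝ) : ℝ := bE μ (z ^ 2 / 4)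

lemma be_hasDerivAt (μ : ℝ) (hμ : 0 ≤ μ) (z : ℝ) :
    HasDerivAt (be μ) (- (z / 2) * be (μ+1) z) z := by
  have h1 : HasDerivAt (fun z : ℝ => z ^ 2 / 4) (z / 2) z := by
    have := (hasDerivAt_pow 2 z).div_const 4
    refine this.congr_deriv ?_
    push_cast
    ring
  have := (bE_hasDerivAt μ hμ (z ^ 2 / 4)).comp z h1
  refine this.congr_deriv ?_
  unfold be
  ring

lemma be_cont (μ : ℝ) (hμ : 0 ≤ μ) : Continuous (be μ) :=
  continuous_iff_continuousAt.2 fun z => (be_hasDerivAt μ hμ z).continuousAt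

lemma bp_hasDerivAt (μ : ℝ) (hμ : 0 ≤ μ) (z : ℝ) (hz : 0 < z) :
    HasDerivAt (fun z => z ^ (2 * (μ + 1)) * be (μ+1) z)
      (2 * z ^ (2 * (μ + 1) - 1) * be μ z) z := by
  have h1 := Real.hasDerivAt_rpow_const (x := z) (p := 2 * (μ+1)) (Or.inl hz.ne')
  have h2 := h1.mul (be_hasDerivAt (μ+1) (by positivity) z)
  refine h2.congr_deriv ?_
  have h3 : z ^ (2 * (μ+1)) = z ^ (2 * (μ+1) - 1) * z := by
    rw [Real.rpow_sub_one hz.ne']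
    field_simp
  have h4 := bE_rec μ hμ (z ^ 2 / 4)
  rw [h3]
  unfold be
  rw [← h4]
  ring

lemma bp_cont (μ : ℝ) (hμ : 0 ≤ μ) :
    Continuous (fun z : ℝ => z ^ (2 * (μ + 1)) * be (μ+1) z) :=
  (Real.continuous_rpow_const (by positivity)).mul (be_cont _ (by positivity))

lemma besselJ_eq (μ z : ℝ) (hz : 0 < z) : besselJ μ z = (z / 2) ^ μ * be μ z := by
  unfold besselJ be bE
  rw [← tsum_mul_left]
  congr 1
  funext m
  rw [Real.rpow_add (by positivity), show (2 * (m:ℝ)) = ((2 * m : ℕ) : ℝ) by push_cast; ring,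
    Real.rpow_natCast, pow_mul]
  unfold bcoef
  rw [show (z / 2) ^ 2 = z ^ 2 / 4 by ring]
  ring

lemma besselJ_zero_iff (μ z : ℝ) (hz : 0 < z) : besselJ μ z = 0 ↔ be μ z = 0 := by
  rw [besselJ_eq μ z hz]
  have : (z / 2) ^ μ ≠ 0 := (Real.rpow_pos_of_pos (by positivity) _).ne'
  simp [this]

lemma bmvt (μ : ℝ) (hμ : 0 ≤ μ) (a b : ℝ) (ha : 0 ≤ a) (hab : a < b)
    (hz : a = 0 ∨ be (μ+1) a = 0) :
    ∃ c ∈ Set.Ioo a b, ∃ C > 0, be (μ+1) b = C * be μ c := by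
  obtain ⟨c, hc, h⟩ := exists_hasDerivAt_eq_slope
    (fun z : ℝ => z ^ (2 * (μ + 1)) * be (μ+1) z) _ hab (bp_cont μ hμ).continuousOn
    (fun x hx => bp_hasDerivAt μ hμ x (ha.trans_lt hx.1))
  have hzero : a ^ (2 * (μ + 1)) * be (μ+1) a = 0 := by
    rcases hz with rfl | h
    · rw [Real.zero_rpow (by positivity), zero_mul]
    · rw [h, mul_zero]
  have hc0 : 0 < c := ha.trans_lt hc.1
  have hb0 : 0 < b := ha.trans_lt hab
  have hp1 := Real.rpow_pos_of_pos hc0 (2 * (μ + 1) - 1)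
  have hp2 := Real.rpow_pos_of_pos hb0 (2 * (μ + 1))
  have hba : 0 < b - a := sub_pos.2 hab
  refine ⟨c, hc, 2 * c ^ (2 * (μ + 1) - 1) * (b - a) / b ^ (2 * (μ + 1)), by positivity, ?_⟩
  simp only [hzero, sub_zero] at h
  rw [eq_div_iff hba.ne'] at h
  rw [div_mul_eq_mul_div, eq_div_iff hp2.ne']
  linarith

lemma brolle (μ : ℝ) (hμ : 0 ≤ μ) (a b : ℝ) (ha : 0 < a) (hab : a < b)
    (h1 : be μ a = 0) (h2 : be μ b = 0) : ∃ c ∈ Set.Ioo a b, be (μ+1) c = 0 := by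
  obtain ⟨c, hc, h⟩ := exists_hasDerivAt_eq_zero hab (be_cont μ hμ).continuousOn
    (h1.trans h2.symm) (fun x _ => be_hasDerivAt μ hμ x)
  refine ⟨c, hc, ?_⟩
  have : 0 < c := ha.trans hc.1
  rcases mul_eq_zero.1 h with h | h
  · linarith
  · exact h

lemma benum (μ : ℝ) (x : ℕ → ℝ) (h : EnumPosZeros (besselJ μ) x) :
    EnumPosZeros (be μ) x := by
  obtain ⟨h1, h2, h3⟩ := h
  exact ⟨h1, fun k hk => ⟨(h2 k hk).1, (besselJ_zero_iff μ _ (h2 k hk).1).1 (h2 k hk).2⟩,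
    fun z hz h => h3 z hz ((besselJ_zero_iff μ z hz).2 h)⟩

lemma binter (μ : ℝ) (hμ : 0 ≤ μ) (a b : ℕ → ℝ)
    (ha : EnumPosZeros (be μ) a) (hb : EnumPosZeros (be (μ+1)) b) (k : ℕ) :
    a (k+1) < b (k+1) ∧ b (k+1) < a (k+2) := by
  obtain ⟨a1, a2, a3⟩ := ha
  obtain ⟨b1, b2, b3⟩ := hb
  have step : ∀ (x : ℕ → ℝ), StrictMonoOn x (Set.Ici 1) → ∀ i j, 1 ≤ i → 1 ≤ j →
      x i < x j → i < j := fun x hx i j hi hj h => (hx.lt_iff_lt hi hj).1 h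
  have mon : ∀ (x : ℕ → ℝ), StrictMonoOn x (Set.Ici 1) → ∀ i j, 1 ≤ i → 1 ≤ j →
      i ≤ j → x i ≤ x j := fun x hx i j hi hj h => (hx.le_iff_le hi hj).2 h
  induction k with
  | zero =>
    constructor
    · obtain ⟨c, hc, C, hC, h⟩ := bmvt μ hμ 0 (b 1) le_rfl (b2 1 le_rfl).1 (Or.inl rfl)
      rw [(b2 1 le_rfl).2] at h
      have h0 : be μ c = 0 := by
        rcases mul_eq_zero.1 h.symm with h | h
        · linarith
        · exact h
      obtain ⟨j, hj, rfl⟩ := a3 c hc.1 h0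
      exact (mon a a1 1 j le_rfl hj hj).trans_lt hc.2
    · obtain ⟨c, hc, h⟩ := brolle μ hμ (a 1) (a 2) (a2 1 le_rfl).1
        (a1 (by simp) (by simp) (by norm_num)) (a2 1 le_rfl).2 (a2 2 (by norm_num)).2
      obtain ⟨j, hj, rfl⟩ := b3 c ((a2 1 le_rfl).1.trans hc.1) h
      exact (mon b b1 1 j le_rfl hj hj).trans_lt hc.2
  | succ n ih =>
    obtain ⟨i1, i2⟩ := ih
    constructor
    · have p := b2 (n+1) (by omega)
      have q := b2 (n+2) (by omega)
      obtain ⟨c, hc, C, hC, h⟩ := bmvt μ hμ (b (n+1)) (b (n+2)) p.1.le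
        (b1 (by simp) (by simp) (by omega)) (Or.inr p.2)
      rw [q.2] at h
      have h0 : be μ c = 0 := by
        rcases mul_eq_zero.1 h.symm with h | h
        · linarith
        · exact h
      obtain ⟨j, hj, rfl⟩ := a3 c (p.1.trans hc.1) h0
      have := step a a1 (n+1) j (by omega) hj (i1.trans hc.1)
      exact (mon a a1 (n+2) j (by omega) hj this).trans_lt hc.2
    · have p := a2 (n+2) (by omega)
      have q := a2 (n+3) (by omega)
      obtain ⟨c, hc, h⟩ := brolle μ hμ (a (n+2)) (a (n+3)) p.1
        (a1 (by simp) (by simp) (by omega)) p.2 q.2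
      obtain ⟨j, hj, rfl⟩ := b3 c (p.1.trans hc.1) h
      have := step b b1 (n+1) j (by omega) hj (i2.trans hc.1)
      exact (mon b b1 (n+2) j (by omega) hj this).trans_lt hc.2

lemma bmain (μ : ℝ) (hμ : 0 ≤ μ) (a b : ℕ → ℝ)
    (ha : EnumPosZeros (be μ) a) (hb : EnumPosZeros (be (μ+1)) b) (k : ℕ)
    (z : ℝ) (hz1 : b (k+1) ≤ z) (hz2 : z ≤ a (k+2)) (t s : ℝ) (ht : 0 < t) (hs : 0 < s)
    (h : t * be μ z + s * be (μ+1) z = 0) : False := by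
  obtain ⟨i1, i2⟩ := binter μ hμ a b ha hb k
  have nz : ∀ y, b (k+1) ≤ y → y < a (k+2) → be μ y ≠ 0 := by
    intro y h1 h2 h0
    obtain ⟨a1, a2, a3⟩ := ha
    obtain ⟨j, hj, rfl⟩ := a3 y (((hb.2.1 (k+1) (by omega)).1).trans_le h1) h0
    have l1 := (a1.lt_iff_lt (a := k+1) (b := j) (by simp) hj).1 (i1.trans_le h1)
    have l2 := (a1.lt_iff_lt (a := j) (b := k+2) hj (by simp)).1 h2
    omega
  have p := hb.2.1 (k+1) (by omega)
  rcases hz1.eq_or_lt with rfl | hlt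
  · rw [p.2, mul_zero, add_zero] at h
    rcases mul_eq_zero.1 h with h | h
    · linarith
    · exact nz _ le_rfl i2 h
  obtain ⟨c, hc, C, hC, hCe⟩ := bmvt μ hμ _ z p.1.le hlt (Or.inr p.2)
  have hcn := nz c hc.1.le (hc.2.trans_le hz2)
  rw [hCe] at h
  have hF : be μ z = - (s * C / t) * be μ c := by
    field_simp
    linarith
  have hpos : 0 < s * C / t := by positivity
  have hzn : be μ z ≠ 0 := by
    rw [hF]
    exact mul_ne_zero (by linarith) hcn
  have hza : z < a (k+2) := by
    refine lt_of_le_of_ne hz2 ?_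
    rintro rfl
    exact hzn (ha.2.1 (k+2) (by omega)).2
  have h0 : (0:ℝ) ∈ Set.uIcc (be μ c) (be μ z) := by
    rw [Set.mem_uIcc, hF]
    rcases lt_or_gt_of_ne hcn with h | h
    · left
      exact ⟨h.le, by nlinarith⟩
    · right
      exact ⟨by nlinarith, h.le⟩
  obtain ⟨y, hy, hy0⟩ := intermediate_value_uIcc (be_cont μ hμ).continuousOn h0
  rw [Set.uIcc_of_le hc.2.le] at hy
  exact nz y (hc.1.le.trans hy.1) (hy.2.trans_lt hza) hy0

/-- For `ν ≥ 1` and `k ≥ 1`, `J_{ν−1}(z) + J_ν(z) ≠ 0` on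
`[j_{ν,k}, j_{ν−1,k+1}]`. -/
theorem stmt12 (ν : ℝ) (hν : 1 ≤ ν) (k : ℕ) (hk : 1 ≤ k)
    (jm1 jn : ℕ → ℝ)
    (hjm1 : EnumPosZeros (besselJ (ν - 1)) jm1)
    (hjn : EnumPosZeros (besselJ ν) jn) :
    ∀ z ∈ Set.Icc (jn k) (jm1 (k + 1)), besselJ (ν - 1) z + besselJ ν z ≠ 0 := by
  intro z hz h
  obtain ⟨n, rfl⟩ : ∃ n, k = n + 1 := ⟨k - 1, by omega⟩
  have hz0 : 0 < z := ((hjn.2.1 (n+1) hk).1).trans_le hz.1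
  have ha := benum _ _ hjm1
  have hb := benum _ _ hjn
  have e : ν = (ν - 1) + 1 := by ring
  rw [besselJ_eq _ z hz0, besselJ_eq _ z hz0] at h
  have p1 : 0 < (z / 2) ^ (ν - 1) := Real.rpow_pos_of_pos (by positivity) _
  have p2 : 0 < (z / 2) ^ ν := Real.rpow_pos_of_pos (by positivity) _
  generalize (z / 2) ^ (ν - 1) = t at *
  generalize (z / 2) ^ ν = s at *
  rw [show be ν = be (ν - 1 + 1) by rw [← e]] at h hb
  exact bmain (ν - 1) (by linarith) jm1 jn ha hb n z hz.1 hz.2 t s p1 p2 h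
end

section
/- Let ν be a real number with ν ≥ 1. For every integer k ≥ 1 one has j_{ν,k} < j′_{ν,k+1} < λ⁺_{ν−1,k+1} < j_{ν,k+1}. -/
open Filter Topology Set

lemma aux_sign_pos {f : ℝ → ℝ} {d x : ℝ} (h : HasDerivAt f d x) (hd : 0 < d) (h0 : f x = 0) :
    (∀ᶠ z in 𝓝[>] x, 0 < f z) ∧ (∀ᶠ z in 𝓝[<] x, f z < 0) := by
  have h1 := (hasDerivAt_iff_tendsto_slope.1 h).eventually (lt_mem_nhds hd)
  have hl : 𝓝[>] x ≤ 𝓝[≠] x := nhdsWithin_mono _ (fun z hz => ne_of_gt hz)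
  have hr : 𝓝[<] x ≤ 𝓝[≠] x := nhdsWithin_mono _ (fun z hz => ne_of_lt hz)
  constructor
  · filter_upwards [hl h1, self_mem_nhdsWithin] with z hz hz2
    rw [slope_def_field, h0, sub_zero] at hz
    have : 0 < z - x := sub_pos.2 hz2
    exact (div_pos_iff_of_pos_right this).1 hz
  · filter_upwards [hr h1, self_mem_nhdsWithin] with z hz hz2
    rw [slope_def_field, h0, sub_zero] at hz
    have : z - x < 0 := sub_neg.2 hz2
    by_contra hc
    push Not at hc
    exact absurd hz (not_lt.2 (div_nonpos_of_nonneg_of_nonpos hc this.le))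

lemma aux_sign_neg {f : ℝ → ℝ} {d x : ℝ} (h : HasDerivAt f d x) (hd : d < 0) (h0 : f x = 0) :
    (∀ᶠ z in 𝓝[>] x, f z < 0) ∧ (∀ᶠ z in 𝓝[<] x, 0 < f z) := by
  have := aux_sign_pos h.neg (neg_pos.2 hd) (by simp [h0])
  simpa using this

lemma aux_down {f : ℝ → ℝ} {a b : ℝ} (hf : ContinuousOn f (Ioo a b))
    (hd : ∀ z ∈ Ioo a b, f z = 0 → ∃ d, d < 0 ∧ HasDerivAt f d z)
    {x y : ℝ} (hx : x ∈ Ioo a b) (hy : y ∈ Ioo a b) (hxy : x < y) (hfx : f x ≤ 0) : f y < 0 := by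
  by_contra hc
  push Not at hc
  obtain ⟨x', hx'x, hx'y, hfx'⟩ : ∃ x', x ≤ x' ∧ x' < y ∧ f x' < 0 := by
    rcases hfx.lt_or_eq with h | h
    · exact ⟨x, le_rfl, hxy, h⟩
    · obtain ⟨d, hd0, hd1⟩ := hd x hx h
      obtain ⟨z, hz1, hz2⟩ := ((aux_sign_neg hd1 hd0 h).1.and (Ioo_mem_nhdsGT hxy)).exists
      exact ⟨z, hz2.1.le, hz2.2, hz1⟩
  have hsub : Icc x' y ⊆ Ioo a b := fun t ht => ⟨hx.1.trans_le (hx'x.trans ht.1), ht.2.trans_lt hy.2⟩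
  have hcl : IsClosed (Icc x' y ∩ f ⁻¹' Ici 0) :=
    (hf.mono hsub).preimage_isClosed_of_isClosed isClosed_Icc isClosed_Ici
  have hne : (Icc x' y ∩ f ⁻¹' Ici 0).Nonempty := ⟨y, ⟨hx'y.le, le_rfl⟩, hc⟩
  have hbd : BddBelow (Icc x' y ∩ f ⁻¹' Ici 0) := ⟨x', fun t ht => ht.1.1⟩
  have hs := hcl.csInf_mem hne hbd
  set s := sInf (Icc x' y ∩ f ⁻¹' Ici 0) with hsdef
  have hlt : ∀ t, x' ≤ t → t < s → f t < 0 := by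
    intro t h1 h2
    by_contra h3
    push Not at h3
    exact absurd (csInf_le hbd (show t ∈ _ from ⟨⟨h1, h2.le.trans hs.1.2⟩, h3⟩)) (not_le.2 h2)
  have hx's : x' < s := by
    rcases hs.1.1.lt_or_eq with h | h
    · exact h
    · have := hs.2
      rw [← h] at this
      exact absurd hfx' (not_lt.2 this)
  have hcs : ContinuousAt f s := hf.continuousAt (Ioo_mem_nhds (hsub hs.1).1 (hsub hs.1).2)
  have hfs : f s = 0 := by
    refine le_antisymm ?_ hs.2
    refine le_of_tendsto (hcs.tendsto.mono_left (nhdsWithin_le_nhds (s := Iio s))) ?_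
    filter_upwards [Ioo_mem_nhdsLT hx's] with t ht
    exact (hlt t ht.1.le ht.2).le
  obtain ⟨d, hd0, hd1⟩ := hd s (hsub hs.1) hfs
  obtain ⟨z, hz1, hz2⟩ := ((aux_sign_neg hd1 hd0 hfs).2.and (Ioo_mem_nhdsLT hx's)).exists
  exact absurd hz1 (hlt z hz2.1.le hz2.2).not_gt

lemma aux_interval {f : ℝ → ℝ} {a b : ℝ} (hab : a < b) (hf : ContinuousOn f (Ioo a b))
    (hd : ∀ z ∈ Ioo a b, f z = 0 → ∃ d, d < 0 ∧ HasDerivAt f d z)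
    (ha : ∀ᶠ z in 𝓝[>] a, 0 < f z) (hb : ∀ᶠ z in 𝓝[<] b, f z < 0) :
    ∃ c ∈ Ioo a b, f c = 0 ∧ (∀ z ∈ Ioo a c, 0 < f z) ∧ (∀ z ∈ Ioo c b, f z < 0) := by
  obtain ⟨x, hx1, hx2⟩ := (ha.and (Ioo_mem_nhdsGT hab)).exists
  obtain ⟨y, hy1, hy2⟩ := (hb.and (Ioo_mem_nhdsLT hx2.2)).exists
  have hsub : Icc x y ⊆ Ioo a b := fun t ht => ⟨hx2.1.trans_le ht.1, ht.2.trans_lt hy2.2⟩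
  obtain ⟨c, hc1, hc2⟩ := intermediate_value_Icc' hy2.1.le (hf.mono hsub) ⟨hy1.le, hx1.le⟩
  have hc := hsub hc1
  refine ⟨c, hc, hc2, fun z hz => ?_, fun z hz => ?_⟩
  · by_contra h
    push Not at h
    exact absurd hc2 (aux_down hf hd ⟨hz.1, hz.2.trans hc.2⟩ hc hz.2 h).ne
  · exact aux_down hf hd hc ⟨hc.1.trans hz.1, hz.2⟩ hz.1 hc2.le

lemma aux_enum {g : ℝ → ℝ} {a x : ℕ → ℝ} (ha : StrictMono a) (ha0 : a 0 = 0)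
    (hx : EnumPosZeros g x)
    (hne : ∀ k, 1 ≤ k → g (a k) ≠ 0)
    (hc : ∀ k, ∃ c ∈ Ioo (a k) (a (k+1)), g c = 0 ∧ ∀ z ∈ Ioo (a k) (a (k+1)), g z = 0 → z = c) :
    ∀ k, x (k+1) ∈ Ioo (a k) (a (k+1)) := by
  obtain ⟨hm, hz, hs⟩ := hx
  intro k
  induction k with
  | zero =>
    obtain ⟨c, hc1, hc2, hc3⟩ := hc 0
    obtain ⟨m, hm1, rfl⟩ := hs c (by have := hc1.1; rwa [ha0] at this) hc2
    have hle : x 1 ≤ x m := hm.monotoneOn (by simp) (by simpa using hm1) hm1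
    exact ⟨by rw [ha0]; exact (hz 1 le_rfl).1, hle.trans_lt hc1.2⟩
  | succ k ih =>
    obtain ⟨c, hc1, hc2, hc3⟩ := hc (k+1)
    have hpos : 0 < a (k+1) := by rw [← ha0]; exact ha (by omega)
    obtain ⟨m, hm1, rfl⟩ := hs c (hpos.trans hc1.1) hc2
    have hkm : k + 1 < m := by
      by_contra h
      have : x m ≤ x (k+1) := hm.monotoneOn (by simpa using hm1) (by simp) (by omega)
      linarith [hc1.1, ih.2]
    have hle : x (k+1+1) ≤ x m := hm.monotoneOn (by simp) (by simpa using hm1) hkm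
    refine ⟨?_, hle.trans_lt hc1.2⟩
    by_contra h
    push Not at h
    have h1 : x (k+1) < x (k+1+1) := hm (by simp) (by simp) (by omega)
    have hz2 := (hz (k+1+1) (by omega)).2
    rcases h.lt_or_eq with h | h
    · obtain ⟨c', hc1', hc2', hc3'⟩ := hc k
      have e1 := hc3' _ ih (hz (k+1) (by omega)).2
      have e2 := hc3' _ ⟨ih.1.trans h1, h⟩ hz2
      linarith
    · exact hne (k+1) (by omega) (h ▸ hz2)

/-- coefficients -/
noncomputable def bA (μ : ℝ) (m : ℕ) : ℝ := (-1 : ℝ) ^ m / (Nat.factorial m * Real.Gamma (μ + m + 1))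

noncomputable def bF (μ x : ℝ) : ℝ := ∑' m : ℕ, bA μ m * x ^ m

lemma bA_bound {μ : ℝ} (hμ : 0 ≤ μ) (m : ℕ) :
    |bA μ m| ≤ (1 / Real.Gamma (μ + 1)) * (1 / (Nat.factorial m : ℝ)) := by
  have h0 : 0 < Real.Gamma (μ + 1) := Real.Gamma_pos_of_pos (by linarith)
  have h1 : ∀ m : ℕ, Real.Gamma (μ + 1) ≤ Real.Gamma (μ + m + 1) := by
    intro m
    induction m with
    | zero => simp
    | succ m ih =>
      have hp : 0 < μ + m + 1 := by positivity
      have e : μ + ((m + 1 : ℕ) : ℝ) + 1 = (μ + m + 1) + 1 := by push_cast; ring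
      rw [e, Real.Gamma_add_one hp.ne']
      have : (1 : ℝ) ≤ μ + m + 1 := by
        have : (0:ℝ) ≤ m := m.cast_nonneg
        linarith
      nlinarith
  have h2 := h1 m
  have h3 : (0:ℝ) < Nat.factorial m := by positivity
  unfold bA
  rw [abs_div, abs_pow, abs_neg, abs_one, one_pow, abs_of_pos (by positivity), one_div_mul_one_div,
    mul_comm (Real.Gamma (μ + 1))]
  gcongr

lemma bA_succ {μ : ℝ} (m : ℕ) : bA μ (m+1) * (m+1) = - bA (μ+1) m := by
  unfold bA
  have : μ + ((m+1 : ℕ):ℝ) + 1 = μ + 1 + m + 1 := by push_cast; ring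
  rw [this, Nat.factorial_succ]
  push_cast
  have h : (m:ℝ) + 1 ≠ 0 := by positivity
  rw [pow_succ]
  field_simp

lemma bF_summable {μ : ℝ} (hμ : 0 ≤ μ) (x : ℝ) : Summable (fun m => bA μ m * x ^ m) := by
  refine Summable.of_norm_bounded ((Real.summable_pow_div_factorial |x|).mul_left (1 / Real.Gamma (μ + 1))) ?_
  intro m
  rw [Real.norm_eq_abs, abs_mul, abs_pow]
  calc _ ≤ (1 / Real.Gamma (μ + 1)) * (1 / (Nat.factorial m : ℝ)) * |x| ^ m := by
        gcongr; exact bA_bound hμ m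
    _ = _ := by ring

lemma bF_deriv {μ : ℝ} (hμ : 0 ≤ μ) (x : ℝ) : HasDerivAt (bF μ) (- bF (μ + 1) x) x := by
  set R := |x| + 1 with hR
  have hRp : 0 < R := by positivity
  have hC : 0 < Real.Gamma (μ + 1) := Real.Gamma_pos_of_pos (by linarith)
  set u : ℕ → ℝ := fun m => (1 / Real.Gamma (μ + 1)) * (1 / (Nat.factorial m : ℝ)) * (m * R ^ (m-1))
  have hu : Summable u := by
    rw [← summable_nat_add_iff 1]
    refine ((Real.summable_pow_div_factorial R).mul_left (1 / Real.Gamma (μ + 1))).congr ?_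
    intro m
    simp only [u, Nat.factorial_succ, Nat.add_sub_cancel]
    push_cast
    have h : (m:ℝ) + 1 ≠ 0 := by positivity
    field_simp
  have hD := hasDerivAt_tsum_of_isPreconnected (g := fun m y => bA μ m * y ^ m)
    (g' := fun m y => bA μ m * (m * y ^ (m-1))) hu Metric.isOpen_ball
    ((convex_ball (0:ℝ) R).isPreconnected)
    (fun m y _ => (hasDerivAt_pow m y).const_mul (bA μ m))
    (by
      intro m y hy
      rw [Metric.mem_ball, dist_zero_right, Real.norm_eq_abs] at hy
      rw [Real.norm_eq_abs, abs_mul, abs_mul, abs_pow, Nat.abs_cast]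
      simp only [u]
      have := bA_bound hμ m
      gcongr)
    (y₀ := 0) (y := x) (by simpa using hRp) (bF_summable hμ 0)
    (by simp [hR])
  have e : ∑' m : ℕ, bA μ m * (m * x ^ (m-1)) = - bF (μ + 1) x := by
    have hs : Summable fun m : ℕ => bA μ m * (m * x ^ (m-1)) := by
      rw [← summable_nat_add_iff 1]
      refine (bF_summable (μ := μ + 1) (by linarith) x).neg.congr ?_
      intro m
      have := bA_succ (μ := μ) m
      simp only [Nat.add_sub_cancel]
      push_cast
      linear_combination (-x^m) * this
    rw [hs.tsum_eq_zero_add]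
    simp only [Nat.add_sub_cancel, bF, ← tsum_neg]
    simp only [Nat.cast_zero, zero_mul, mul_zero, zero_add]
    congr 1
    ext m
    have := bA_succ (μ := μ) m
    push_cast
    linear_combination (x^m) * this
  rw [e] at hD
  exact hD

lemma bF_rec {ν : ℝ} (hν : 1 ≤ ν) (x : ℝ) : bF (ν - 1) x + x * bF (ν + 1) x = ν * bF ν x := by
  have s1 := bF_summable (μ := ν - 1) (by linarith) x
  have s2 := bF_summable (μ := ν) (by linarith) x
  have s3 := bF_summable (μ := ν + 1) (by linarith) x
  have key : ∀ m : ℕ, bA (ν - 1) m = (ν + m) * bA ν m := by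
    intro m
    unfold bA
    have hp : 0 < ν + m := by positivity
    have hg : 0 < Real.Gamma (ν + m) := Real.Gamma_pos_of_pos hp
    rw [Real.Gamma_add_one hp.ne', show ν - 1 + m + 1 = ν + m by ring]
    field_simp
  unfold bF
  rw [s1.tsum_eq_zero_add, ← tsum_mul_left, ← tsum_mul_left, (s2.mul_left ν).tsum_eq_zero_add,
    add_assoc, ← ((summable_nat_add_iff 1).2 s1).tsum_add (s3.mul_left x)]
  congr 1
  · rw [key]; simp
  · congr 1
    ext m
    rw [key]
    have := bA_succ (μ := ν) m
    push_cast
    linear_combination (x^(m+1)) * this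

lemma bJ_eq (μ : ℝ) {z : ℝ} (hz : 0 < z) : besselJ μ z = (z/2)^μ * bF μ ((z/2)^2) := by
  unfold besselJ bF
  rw [← tsum_mul_left]
  congr 1
  ext m
  have h2 : 0 < z / 2 := by positivity
  rw [Real.rpow_add h2, ← pow_mul]
  have : (z/2) ^ (2 * (m:ℝ)) = (z/2)^(2*m) := by
    rw [← Real.rpow_natCast]; push_cast; rfl
  rw [this]
  unfold bA
  ring

lemma bJ_deriv {μ : ℝ} (hμ : 0 ≤ μ) {z : ℝ} (hz : 0 < z) :
    HasDerivAt (besselJ μ) (μ / z * besselJ μ z - besselJ (μ + 1) z) z := by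
  have h2 : 0 < z / 2 := by positivity
  have hlin : HasDerivAt (fun z : ℝ => z / 2) (1/2) z := (hasDerivAt_id z).div_const 2
  have h1 := hlin.rpow_const (p := μ) (Or.inl h2.ne')
  have h3 := (bF_deriv hμ ((z/2)^2)).comp z (hlin.pow 2)
  have h4 := h1.mul h3
  have h5 : HasDerivAt (besselJ μ) _ z := h4.congr_of_eventuallyEq (by
    filter_upwards [lt_mem_nhds hz] with y hy
    rw [bJ_eq μ hy]; rfl)
  convert h5 using 1
  rw [bJ_eq μ hz, bJ_eq (μ+1) hz, Real.rpow_add h2, Real.rpow_sub h2, Real.rpow_one]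
  simp only [Function.comp, Pi.pow_apply]
  field_simp
  ring

lemma bJ_rec {ν : ℝ} (hν : 1 ≤ ν) {z : ℝ} (hz : 0 < z) :
    besselJ (ν - 1) z + besselJ (ν + 1) z = 2 * ν / z * besselJ ν z := by
  have h2 : 0 < z / 2 := by positivity
  have := bF_rec hν ((z/2)^2)
  rw [bJ_eq (ν-1) hz, bJ_eq (ν+1) hz, bJ_eq ν hz, Real.rpow_add h2, Real.rpow_sub h2, Real.rpow_one]
  field_simp
  field_simp at this
  linear_combination this

lemma bJ_d1 {ν : ℝ} (hν : 1 ≤ ν) {z : ℝ} (hz : 0 < z) :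
    HasDerivAt (besselJ ν) (besselJ (ν - 1) z - ν / z * besselJ ν z) z := by
  have h := bJ_deriv (μ := ν) (by linarith) hz
  convert h using 1
  have := bJ_rec hν hz
  linear_combination this

lemma bJ_d2 {ν : ℝ} (hν : 1 ≤ ν) {z : ℝ} (hz : 0 < z) :
    HasDerivAt (besselJ (ν-1)) ((ν - 1) / z * besselJ (ν-1) z - besselJ ν z) z := by
  have h := bJ_deriv (μ := ν - 1) (by linarith) hz
  rwa [sub_add_cancel] at h

lemma bF_cont {μ : ℝ} (hμ : 0 ≤ μ) : Continuous (bF μ) :=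
  continuous_iff_continuousAt.2 fun x => (bF_deriv hμ x).continuousAt

lemma bJ_lim {μ : ℝ} (hμ : 0 ≤ μ) :
    Tendsto (besselJ μ) (𝓝[>] 0) (𝓝 ((0/2)^μ * bF μ ((0/2)^2))) := by
  have hc : Continuous (fun z : ℝ => (z/2)^μ * bF μ ((z/2)^2)) := by
    have h := bF_cont hμ
    refine Continuous.mul ?_ (by fun_prop)
    exact (continuous_id.div_const 2).rpow_const (fun x => Or.inr hμ)
  refine (hc.continuousAt.tendsto.mono_left nhdsWithin_le_nhds).congr' ?_
  filter_upwards [self_mem_nhdsWithin] with z hz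
  exact (bJ_eq μ hz).symm

lemma bJ_ne {μ : ℝ} (hμ : 0 ≤ μ) : ∀ᶠ z in 𝓝[>] (0:ℝ), besselJ μ z ≠ 0 := by
  have hc : Continuous (fun z : ℝ => bF μ ((z/2)^2)) := by
    have h := bF_cont hμ
    fun_prop
  have h0 : bF μ ((0/2)^2) ≠ 0 := by
    have : bF μ ((0/2)^2) = bA μ 0 := by
      unfold bF
      rw [tsum_eq_single 0]
      · simp
      · intro m hm; simp [hm]
    rw [this]
    have := Real.Gamma_pos_of_pos (show 0 < μ + 1 by linarith)
    simp [bA, this.ne']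
  filter_upwards [(hc.continuousAt.eventually_ne h0).filter_mono nhdsWithin_le_nhds, self_mem_nhdsWithin] with z h hz
  rw [bJ_eq μ hz]
  have h2 : 0 < z / 2 := by have : 0 < z := hz; positivity
  exact mul_ne_zero (Real.rpow_pos_of_pos h2 _).ne' h

lemma bJ_nz {ν : ℝ} (hν : 1 ≤ ν) {z : ℝ} (hz : 0 < z) :
    0 < (besselJ ν z)^2 + (besselJ (ν-1) z)^2 := by
  by_contra hc
  push Not at hc
  have hmono : MonotoneOn (fun z => z^(2*ν) * ((besselJ ν z)^2 + (besselJ (ν-1) z)^2)) (Ioi 0) := by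
    have hd : ∀ x : ℝ, 0 < x → HasDerivAt (fun z => z^(2*ν) * ((besselJ ν z)^2 + (besselJ (ν-1) z)^2))
        (x^(2*ν) / x * ((4*ν-2) * (besselJ (ν-1) x)^2)) x := by
      intro x hx
      have h1 := (Real.hasDerivAt_rpow_const (x := x) (p := 2*ν) (Or.inl hx.ne')).mul
        (((bJ_d1 hν hx).pow 2).add ((bJ_d2 hν hx).pow 2))
      refine HasDerivAt.congr_deriv h1 ?_
      rw [Real.rpow_sub_one hx.ne']
      simp only [Pi.pow_apply, Pi.add_apply]
      field_simp
      ring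
    refine monotoneOn_of_deriv_nonneg (convex_Ioi 0) ?_ ?_ ?_
    · exact fun x hx => (hd x hx).continuousAt.continuousWithinAt
    · rw [interior_Ioi]; exact fun x hx => (hd x hx).differentiableAt.differentiableWithinAt
    · rw [interior_Ioi]
      intro x hx
      have hx' : 0 < x := hx
      rw [(hd x hx).deriv]
      have : 0 < 4*ν-2 := by linarith
      positivity
  obtain ⟨y, hy1, hy2⟩ := ((bJ_ne (μ := ν) (by linarith)).and (Ioo_mem_nhdsGT hz)).exists
  have h := hmono hy2.1 hz hy2.2.le
  have hzp := Real.rpow_pos_of_pos hz (2*ν)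
  have hyp := Real.rpow_pos_of_pos hy2.1 (2*ν)
  have h3 : 0 < (besselJ ν y)^2 + (besselJ (ν-1) y)^2 := by positivity
  have h4 := mul_pos hyp h3
  simp only at h
  nlinarith

noncomputable def bP (ν z : ℝ) : ℝ := besselJ ν z * (z * besselJ (ν-1) z - ν * besselJ ν z)
noncomputable def bQ (ν z : ℝ) : ℝ := besselJ ν z * (besselJ (ν-1) z + besselJ ν z)

lemma bP_deriv {ν : ℝ} (hν : 1 ≤ ν) {z : ℝ} (hz : 0 < z) :
    HasDerivAt (bP ν) (((z * besselJ (ν-1) z - ν * besselJ ν z)^2 + (ν^2-z^2) * (besselJ ν z)^2) / z) z := by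
  have h := (bJ_d1 hν hz).mul (((hasDerivAt_id z).mul (bJ_d2 hν hz)).sub ((bJ_d1 hν hz).const_mul ν))
  refine HasDerivAt.congr_deriv h ?_
  simp
  field_simp
  ring

lemma bQ_deriv {ν : ℝ} (hν : 1 ≤ ν) {z : ℝ} (hz : 0 < z) :
    HasDerivAt (bQ ν) ((besselJ (ν - 1) z - ν / z * besselJ ν z) * (besselJ (ν-1) z + besselJ ν z)
      + besselJ ν z * (((ν - 1) / z * besselJ (ν-1) z - besselJ ν z) + (besselJ (ν - 1) z - ν / z * besselJ ν z))) z :=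
  (bJ_d1 hν hz).mul ((bJ_d2 hν hz).add (bJ_d1 hν hz))

lemma bP_pos {ν : ℝ} (hν : 1 ≤ ν) {z : ℝ} (hz : 0 < z) (hzν : z ≤ ν) : 0 < bP ν z := by
  have hmono : StrictMonoOn (bP ν) (Ioc 0 ν) := by
    refine strictMonoOn_of_deriv_pos (convex_Ioc 0 ν) ?_ ?_
    · exact fun x hx => (bP_deriv hν hx.1).continuousAt.continuousWithinAt
    · rw [interior_Ioc]
      intro x hx
      have hx0 := hx.1
      rw [(bP_deriv hν hx0).deriv]
      refine div_pos ?_ hx0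
      have h1 := bJ_nz hν hx0
      have h2 : 0 < ν^2 - x^2 := by nlinarith [hx.2]
      by_cases hJ : besselJ ν x = 0
      · rw [hJ] at h1 ⊢
        have : besselJ (ν-1) x ≠ 0 := by
          intro h; rw [h] at h1; simp at h1
        have h3 : x * besselJ (ν-1) x ≠ 0 := mul_ne_zero hx0.ne' this
        simp only [mul_zero, sub_zero]
        positivity
      · positivity
  have hlim : Tendsto (bP ν) (𝓝[>] 0) (𝓝 0) := by
    have h1 := bJ_lim (μ := ν) (by linarith)
    have h2 := bJ_lim (μ := ν - 1) (by linarith)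
    have h3 : Tendsto (fun z : ℝ => z) (𝓝[>] 0) (𝓝 0) := nhdsWithin_le_nhds
    have h4 := h1.mul ((h3.mul h2).sub (h1.const_mul ν))
    have e : (0 / 2 : ℝ) ^ ν = 0 := by
      rw [zero_div]; exact Real.zero_rpow (by linarith)
    rw [e] at h4
    simp only [zero_mul, mul_zero, sub_zero] at h4
    exact h4
  have hnn : ∀ y ∈ Ioc 0 ν, 0 ≤ bP ν y := by
    intro y hy
    refine le_of_tendsto hlim ?_
    filter_upwards [Ioo_mem_nhdsGT hy.1] with t ht
    exact (hmono ⟨ht.1, ht.2.le.trans hy.2⟩ hy ht.2).le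
  have h2 : z / 2 ∈ Ioc 0 ν := ⟨by linarith, by linarith⟩
  exact (hnn _ h2).trans_lt (hmono h2 ⟨hz, hzν⟩ (by linarith))

/-- For `ν ≥ 1` and every `k ≥ 1`,
`j_{ν,k} < j′_{ν,k+1} < λ⁺_{ν−1,k+1} < j_{ν,k+1}`. -/
theorem stmt13 (ν : ℝ) (hν : 1 ≤ ν) (k : ℕ) (hk : 1 ≤ k)
    (jn jpn lamp : ℕ → ℝ)
    (hjn : EnumPosZeros (besselJ ν) jn)
    (hjpn : EnumPosZeros (deriv (besselJ ν)) jpn)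
    (hlamp : EnumPosZeros (fun z => besselJ (ν - 1) z + besselJ ν z) lamp) :
    jn k < jpn (k + 1) ∧ jpn (k + 1) < lamp (k + 1) ∧ lamp (k + 1) < jn (k + 1) := by
  have hjn' := hjn
  obtain ⟨hm, hz, hs⟩ := hjn
  set a : ℕ → ℝ := fun k => if k = 0 then 0 else jn k with ha
  have a0 : a 0 = 0 := by simp [ha]
  have a1 : ∀ k, 1 ≤ k → a k = jn k := fun k hk => by simp [ha, show k ≠ 0 by omega]
  have amono : StrictMono a := by
    refine strictMono_nat_of_lt_succ fun n => ?_
    rw [a1 (n+1) (by omega)]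
    rcases Nat.eq_zero_or_pos n with rfl | hn
    · rw [a0]; exact (hz _ le_rfl).1
    · rw [a1 n hn]; exact hm (mem_Ici.2 hn) (by simp) (by omega)
  have hnn : ∀ k, 0 ≤ a k := fun k => by rw [← a0]; exact amono.monotone (by omega)
  have hpos : ∀ k, 1 ≤ k → 0 < a k := fun k hk => by rw [← a0]; exact amono (by omega)
  have hzero : ∀ k, 1 ≤ k → besselJ ν (a k) = 0 := fun k hk => by rw [a1 k hk]; exact (hz k hk).2
  have hKne : ∀ k, 1 ≤ k → besselJ (ν-1) (a k) ≠ 0 := fun k hk h => by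
    have := bJ_nz hν (hpos k hk)
    rw [hzero k hk, h] at this
    simp at this
  have hJne : ∀ k, ∀ z ∈ Ioo (a k) (a (k+1)), besselJ ν z ≠ 0 := by
    intro k z hzz h
    obtain ⟨m, hm1, rfl⟩ := hs z ((hnn k).trans_lt hzz.1) h
    rw [← a1 m hm1] at hzz
    have h1 := amono.lt_iff_lt.1 hzz.1
    have h2 := amono.lt_iff_lt.1 hzz.2
    omega
  have hder : ∀ z, 0 < z → z * deriv (besselJ ν) z = z * besselJ (ν-1) z - ν * besselJ ν z := by
    intro z hz
    rw [(bJ_d1 hν hz).deriv]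
    field_simp
  have hev : ∀ᶠ z in 𝓝[>] (0:ℝ), 0 < bP ν z ∧ z ∈ Ioo 0 ν := by
    filter_upwards [Ioo_mem_nhdsGT (show 0 < ν by linarith)] with z hz
    exact ⟨bP_pos hν hz.1 hz.2.le, hz⟩
  -- behaviour at the nodes
  have hPs : ∀ k, 1 ≤ k → (∀ᶠ z in 𝓝[>] (a k), 0 < bP ν z) ∧ (∀ᶠ z in 𝓝[<] (a k), bP ν z < 0) := by
    intro k hk
    have hp := hpos k hk
    refine aux_sign_pos (bP_deriv hν hp) ?_ ?_
    · have h1 : a k * besselJ (ν-1) (a k) ≠ 0 := mul_ne_zero hp.ne' (hKne k hk)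
      rw [hzero k hk]
      simp only [mul_zero, sub_zero, ne_eq, OfNat.ofNat_ne_zero, not_false_eq_true, zero_pow, add_zero]
      positivity
    · simp [bP, hzero k hk]
  have hQs : ∀ k, 1 ≤ k → (∀ᶠ z in 𝓝[>] (a k), 0 < bQ ν z) ∧ (∀ᶠ z in 𝓝[<] (a k), bQ ν z < 0) := by
    intro k hk
    have hp := hpos k hk
    refine aux_sign_pos (bQ_deriv hν hp) ?_ ?_
    · have h1 := hKne k hk
      rw [hzero k hk]
      simp only [mul_zero, sub_zero, zero_mul, add_zero]
      exact mul_self_pos.2 h1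
    · simp [bQ, hzero k hk]
  have hP : ∀ k, ∃ c ∈ Ioo (a k) (a (k+1)), bP ν c = 0 ∧ (∀ z ∈ Ioo (a k) c, 0 < bP ν z) ∧
      (∀ z ∈ Ioo c (a (k+1)), bP ν z < 0) := by
    intro k
    refine aux_interval (amono (by omega)) ?_ ?_ ?_ (hPs (k+1) (by omega)).2
    · exact fun x hx => (bP_deriv hν ((hnn k).trans_lt hx.1)).continuousAt.continuousWithinAt
    · intro z hzz h0
      have hzp := (hnn k).trans_lt hzz.1
      refine ⟨_, ?_, bP_deriv hν hzp⟩
      have hJ := hJne k z hzz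
      have hzν : ν < z := by
        by_contra hc
        exact absurd h0 (bP_pos hν hzp (not_lt.1 hc)).ne'
      have h2 : z * besselJ (ν-1) z - ν * besselJ ν z = 0 := (mul_eq_zero.1 h0).resolve_left hJ
      rw [h2]
      refine div_neg_of_neg_of_pos ?_ hzp
      have h3 : 0 < (besselJ ν z)^2 := by positivity
      have h4 : ν^2 - z^2 < 0 := by nlinarith
      nlinarith
    · rcases Nat.eq_zero_or_pos k with rfl | hk
      · rw [a0]; exact hev.mono fun z h => h.1
      · exact (hPs k hk).1
  have hQ : ∀ k, ∃ c ∈ Ioo (a k) (a (k+1)), bQ ν c = 0 ∧ (∀ z ∈ Ioo (a k) c, 0 < bQ ν z) ∧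
      (∀ z ∈ Ioo c (a (k+1)), bQ ν z < 0) := by
    intro k
    refine aux_interval (amono (by omega)) ?_ ?_ ?_ (hQs (k+1) (by omega)).2
    · exact fun x hx => (bQ_deriv hν ((hnn k).trans_lt hx.1)).continuousAt.continuousWithinAt
    · intro z hzz h0
      have hzp := (hnn k).trans_lt hzz.1
      refine ⟨_, ?_, bQ_deriv hν hzp⟩
      have hJ := hJne k z hzz
      have h2 : besselJ (ν-1) z + besselJ ν z = 0 := (mul_eq_zero.1 h0).resolve_left hJ
      have h3 : besselJ (ν-1) z = - besselJ ν z := by linarith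
      rw [h3]
      have h4 : 0 < (besselJ ν z)^2 := by positivity
      have h5 : 0 < (2*ν-1)/z + 2 := by
        have : 0 < 2*ν-1 := by linarith
        positivity
      have := mul_pos h5 h4
      have e : ((2*ν-1)/z + 2) * (besselJ ν z)^2 = (ν/z + (ν-1)/z + 2) * (besselJ ν z)^2 := by ring
      rw [e] at this
      nlinarith
    · rcases Nat.eq_zero_or_pos k with rfl | hk
      · rw [a0]
        filter_upwards [hev] with z h
        obtain ⟨h1, h2, h3⟩ := h
        have e : z * bQ ν z = bP ν z + (z + ν) * (besselJ ν z)^2 := by unfold bQ bP; ring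
        have h4 : 0 < z * bQ ν z := by rw [e]; positivity
        exact (mul_pos_iff_of_pos_left h2).1 h4
      · exact (hQs k hk).1
  have huniq : ∀ (f : ℝ → ℝ) (k : ℕ) (c : ℝ), (∀ z ∈ Ioo (a k) c, 0 < f z) →
      (∀ z ∈ Ioo c (a (k+1)), f z < 0) → ∀ z ∈ Ioo (a k) (a (k+1)), f z = 0 → z = c := by
    intro f k c h1 h2 z hz h0
    rcases lt_trichotomy z c with h | h | h
    · exact absurd h0 (h1 z ⟨hz.1, h⟩).ne'
    · exact h
    · exact absurd h0 (h2 z ⟨h, hz.2⟩).ne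
  have hbP : ∀ z, bP ν z = besselJ ν z * (z * besselJ (ν-1) z - ν * besselJ ν z) := fun z => rfl
  have E1 := aux_enum amono a0 hjpn
    (by
      intro k hk h
      have := hder _ (hpos k hk)
      rw [h, hzero k hk] at this
      simp only [mul_zero, sub_zero] at this
      exact mul_ne_zero (hpos k hk).ne' (hKne k hk) this.symm)
    (by
      intro k
      obtain ⟨c, hc, h0, h1, h2⟩ := hP k
      refine ⟨c, hc, ?_, ?_⟩
      · have hcp := (hnn k).trans_lt hc.1
        rw [hbP, ← hder c hcp] at h0
        have := (mul_eq_zero.1 h0).resolve_left (hJne k c hc)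
        exact (mul_eq_zero.1 this).resolve_left hcp.ne'
      · intro z hz hd
        refine huniq _ k c h1 h2 z hz ?_
        rw [hbP, ← hder z ((hnn k).trans_lt hz.1), hd]
        simp) k
  have E2 := aux_enum amono a0 hlamp
    (by
      intro k hk h
      simp only [hzero k hk, add_zero] at h
      exact hKne k hk h)
    (by
      intro k
      obtain ⟨c, hc, h0, h1, h2⟩ := hQ k
      refine ⟨c, hc, (mul_eq_zero.1 h0).resolve_left (hJne k c hc), ?_⟩
      intro z hz hd
      refine huniq _ k c h1 h2 z hz ?_
      simp [bQ, hd]) k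
  refine ⟨by have := E1.1; rwa [a1 k hk] at this, ?_, by have := E2.2; rwa [a1 (k+1) (by omega)] at this⟩
  obtain ⟨c, hc, h0, h1, h2⟩ := hP k
  have hp0 : bP ν (jpn (k+1)) = 0 := by
    obtain ⟨hp, hd⟩ := hjpn.2.1 (k+1) (by omega)
    rw [hbP, ← hder _ hp, hd]
    simp
  have hjc := huniq _ k c h1 h2 _ E1 hp0
  obtain ⟨hl, hl0⟩ := hlamp.2.1 (k+1) (by omega)
  simp only at hl0
  have hlJ := hJne k _ E2
  have hneg : bP ν (lamp (k+1)) < 0 := by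
    have h3 : besselJ (ν-1) (lamp (k+1)) = - besselJ ν (lamp (k+1)) := by linarith
    rw [hbP, h3]
    have h4 : 0 < (lamp (k+1) + ν) * (besselJ ν (lamp (k+1)))^2 := by positivity
    nlinarith
  rw [hjc]
  by_contra hcon
  rcases (not_lt.1 hcon).lt_or_eq with h | h
  · exact absurd hneg (h1 _ ⟨E2.1, h⟩).not_gt
  · rw [h, h0] at hneg; exact lt_irrefl _ hneg
end
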